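/- Let ν be a real number with ν ≥ 1. For every integer k ≥ 1 one has j_{ν,k} < j′_{ν,k+1} < λ⁺_{ν−1,k+1} < j_{ν,k+1}. -/

import Mathlib

/-- Bessel function of the first kind of real order `ν`, defined via its power series
`J_ν(z) = ∑ₘ (−1)^m / (m! Γ(ν+m+1)) (z/2)^(ν+2m)` (with real-exponent powers). -/
noncomputable def besselJ (ν z : ℝ) : ℝ :=
  ∑' m : ℕ, ((-1 : ℝ) ^ m / (Nat.factorial m * Real.Gamma (ν + m + 1))) *
    (z / 2) ^ (ν + 2 * (m : ℝ))

/-- `x` (indexed by `k ≥ 1`) enumerates the positive zeroes of `f`: it is strictly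
increasing on indices `k ≥ 1`, each `x k` is a positive zero of `f`, and every positive
zero of `f` is some `x k`. -/
def EnumPosZeros (f : ℝ → ℝ) (x : ℕ → ℝ) : Prop :=
  StrictMonoOn x (Set.Ici 1) ∧ (∀ k, 1 ≤ k → 0 < x k ∧ f (x k) = 0) ∧
    ∀ z : ℝ, 0 < z → f z = 0 → ∃ k, 1 ≤ k ∧ x k = z

/-!
The quotient `J_{ν+1} / J_ν` is strictly increasing between zeros of `J_ν`. Its derivative has the
sign of `w = z (J_ν J_{ν+1}' - J_ν' J_{ν+1})`, and with `T = z (J_ν² - J_{ν-1} J_{ν+1})` one has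
`(z T)' = 2 z J_ν²` and `(z ^ (2ν + 1) w)' = (2ν + 1) z ^ (2ν) T`; both functions vanish at `0`, so
first `T` and then `w` is positive on `(0, ∞)`.

Hence `J_ν' / J_ν = ν / z - J_{ν+1} / J_ν` and `J_{ν-1} / J_ν = 2ν / z - J_{ν+1} / J_ν` are strictly
decreasing there, so `J_ν'` and `J_{ν-1} + J_ν` each have at most one zero between consecutive
elements of `0, j_{ν,1}, j_{ν,2}, …`. Rolle's theorem, for `J_ν` and for `z ^ ν eᶻ J_ν`, gives
exactly one. At the zero of `J_{ν-1} + J_ν` the decreasing function `J_ν' / J_ν` equals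
`-1 - ν / z < 0`, so this zero lies to the right of that of `J_ν'`.
-/

open Filter Topology Set

namespace EnumPosZeros

variable {f g : ℝ → ℝ} {j x : ℕ → ℝ}

lemma pos (hf : EnumPosZeros f j) (k : ℕ) : 0 < j (k + 1) :=
  (hf.2.1 (k + 1) (by lia)).1

lemma apply_eq_zero (hf : EnumPosZeros f j) (k : ℕ) : f (j (k + 1)) = 0 :=
  (hf.2.1 (k + 1) (by lia)).2

lemma strictMono_succ (hf : EnumPosZeros f j) : StrictMono fun k => j (k + 1) :=
  fun _ _ h => hf.1 (by simp) (by simp) (by lia)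

lemma exists_succ_eq (hf : EnumPosZeros f j) {z : ℝ} (hz : 0 < z) (hfz : f z = 0) :
    ∃ k, j (k + 1) = z := by
  obtain ⟨k, hk, rfl⟩ := hf.2.2 z hz hfz
  exact ⟨k - 1, by rw [Nat.sub_add_cancel hk]⟩

-- The value `j 0` is junk; `Function.update j 0 0` is the sequence `0, j 1, j 2, …`.
lemma strictMono_update (hf : EnumPosZeros f j) : StrictMono (Function.update j 0 0) := by
  refine strictMono_nat_of_lt_succ fun k => ?_
  cases k with
  | zero => simpa using hf.pos 0
  | succ k => simpa using hf.strictMono_succ (Nat.lt_succ_self k)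

lemma update_nonneg (hf : EnumPosZeros f j) (k : ℕ) : 0 ≤ Function.update j 0 0 k := by
  simpa using hf.strictMono_update.monotone (Nat.zero_le k)

lemma apply_update_eq_zero (hf : EnumPosZeros f j) (hf0 : f 0 = 0) (k : ℕ) :
    f (Function.update j 0 0 k) = 0 := by
  cases k with
  | zero => simpa using hf0
  | succ k => simpa using hf.apply_eq_zero k

lemma ne_zero_of_mem_Ioo (hf : EnumPosZeros f j) {k : ℕ} {z : ℝ}
    (hz : z ∈ Ioo (Function.update j 0 0 k) (Function.update j 0 0 (k + 1))) : f z ≠ 0 := by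
  intro hfz
  obtain ⟨m, rfl⟩ := hf.exists_succ_eq ((hf.update_nonneg k).trans_lt hz.1) hfz
  have hm : j (m + 1) = Function.update j 0 0 (m + 1) := by simp
  rw [hm] at hz
  have hkm := hf.strictMono_update.lt_iff_lt.1 hz.1
  have hmk := hf.strictMono_update.lt_iff_lt.1 hz.2
  lia

lemma mem_Ioo_of_existsUnique {a : ℕ → ℝ} (hg : EnumPosZeros g x) (ha : Monotone a)
    (ha0 : a 0 = 0) (hne : ∀ k, g (a (k + 1)) ≠ 0)
    (hunique : ∀ k, ∃! c, c ∈ Ioo (a k) (a (k + 1)) ∧ g c = 0) (k : ℕ) :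
    x (k + 1) ∈ Ioo (a k) (a (k + 1)) := by
  have ha_nonneg (k : ℕ) : 0 ≤ a k := ha0 ▸ ha (Nat.zero_le k)
  have lt_of_forall_lt (k : ℕ) (hk : ∀ m < k, x (m + 1) < a k) : x (k + 1) < a (k + 1) := by
    obtain ⟨c, ⟨hc, hgc⟩, -⟩ := hunique k
    obtain ⟨m, rfl⟩ := hg.exists_succ_eq ((ha_nonneg k).trans_lt hc.1) hgc
    have hkm : k ≤ m := by
      by_contra! hmk
      exact (hk m hmk).not_gt hc.1
    exact (hg.strictMono_succ.monotone hkm).trans_lt hc.2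
  induction k with
  | zero => exact ⟨ha0 ▸ hg.pos 0, lt_of_forall_lt 0 (by simp)⟩
  | succ k ih =>
    have hlt : x (k + 1) < x (k + 1 + 1) := hg.strictMono_succ (Nat.lt_succ_self k)
    refine ⟨?_, lt_of_forall_lt (k + 1) fun m hm =>
      (hg.strictMono_succ.monotone (Nat.le_of_lt_succ hm)).trans_lt ih.2⟩
    by_contra! hle
    have hlt_node : x (k + 1 + 1) < a (k + 1) :=
      hle.lt_of_ne fun h => hne k (h ▸ hg.apply_eq_zero (k + 1))
    exact hlt.ne ((hunique k).unique ⟨ih, hg.apply_eq_zero k⟩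
      ⟨⟨ih.1.trans hlt, hlt_node⟩, hg.apply_eq_zero (k + 1)⟩)

theorem interlace (hf : EnumPosZeros f j) (hg : EnumPosZeros g x) (hf0 : f 0 = 0)
    (hne : ∀ z, 0 < z → f z = 0 → g z ≠ 0)
    (hexists : ∀ a b, 0 ≤ a → a < b → f a = 0 → f b = 0 → ∃ c ∈ Ioo a b, g c = 0)
    (hsub : ∀ a b, 0 ≤ a → (∀ z ∈ Ioo a b, f z ≠ 0) → {z ∈ Ioo a b | g z = 0}.Subsingleton)
    (k : ℕ) :
    x (k + 1) ∈ Ioo (Function.update j 0 0 k) (Function.update j 0 0 (k + 1)) := by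
  refine hg.mem_Ioo_of_existsUnique hf.strictMono_update.monotone (by simp) (fun k => ?_)
    (fun k => ?_) k
  · simpa using hne _ (hf.pos k) (hf.apply_eq_zero k)
  · obtain ⟨c, hc⟩ := hexists _ _ (hf.update_nonneg k) (hf.strictMono_update (Nat.lt_succ_self k))
      (hf.apply_update_eq_zero hf0 k) (hf.apply_update_eq_zero hf0 (k + 1))
    exact ⟨c, hc, fun z hz =>
      hsub _ _ (hf.update_nonneg k) (fun z hz => hf.ne_zero_of_mem_Ioo hz) hz hc⟩

end EnumPosZeros

lemma pos_of_deriv_nonneg_of_eventually_pos {f f' : ℝ → ℝ} {a : ℝ} (hf : ContinuousOn f (Ici a))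
    (hfa : f a = 0) (hderiv : ∀ z ∈ Ioi a, HasDerivAt f (f' z) z)
    (hnonneg : ∀ z ∈ Ioi a, 0 ≤ f' z) (hpos : ∀ᶠ z in 𝓝[>] a, 0 < f' z) {z : ℝ} (hz : a < z) :
    0 < f z := by
  obtain ⟨b, hb, hposb⟩ := mem_nhdsGT_iff_exists_Ioo_subset.1 hpos
  have hmono : MonotoneOn f (Ici a) := by
    refine monotoneOn_of_hasDerivWithinAt_nonneg (f' := f') (convex_Ici a) hf ?_ ?_ <;>
      rw [interior_Ici]
    exacts [fun y hy => (hderiv y hy).hasDerivWithinAt, hnonneg]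
  have hstrict : StrictMonoOn f (Ico a b) := by
    refine strictMonoOn_of_hasDerivWithinAt_pos (f' := f') (convex_Ico a b)
      (hf.mono Ico_subset_Ici_self) ?_ ?_ <;> rw [interior_Ico]
    exacts [fun y hy => (hderiv y hy.1).hasDerivWithinAt, fun y hy => hposb hy]
  obtain ⟨y, hay, hyz⟩ := exists_between (lt_min hz hb)
  calc 0 = f a := hfa.symm
    _ < f y := hstrict ⟨le_rfl, hb⟩ ⟨hay.le, hyz.trans_le (min_le_right _ _)⟩ hay
    _ ≤ f z := hmono hay.le hz.le (hyz.trans_le (min_le_left _ _)).le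

section BesselClifford

variable (ν x : ℝ)

/-- The `m`-th Taylor coefficient `1 / (m! Γ(ν + m + 1))` of the Bessel–Clifford function of order
`ν`. At the poles of `Γ` the value `Real.Gamma (-n) = 0` and division by zero give the coefficient
`0`, which is the value of the entire function `1 / Γ` there. -/
noncomputable def besselCliffordCoeff (m : ℕ) : ℝ := 1 / (m.factorial * Real.Gamma (ν + m + 1))

/-- The Bessel–Clifford function `C_ν(x) = ∑ₘ xᵐ / (m! Γ(ν + m + 1))`, an entire function carrying
the power series of `J_ν` freed of the factor `(z / 2) ^ ν`. -/
noncomputable def besselClifford : ℝ := ∑' m, besselCliffordCoeff ν m * x ^ m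

lemma succ_mul_besselCliffordCoeff_succ (m : ℕ) :
    (m + 1) * besselCliffordCoeff ν (m + 1) = besselCliffordCoeff (ν + 1) m := by
  have harg : ν + (m + 1 : ℕ) + 1 = ν + 1 + m + 1 := by push_cast; ring
  rw [besselCliffordCoeff, besselCliffordCoeff, harg, Nat.factorial_succ]
  push_cast
  field_simp

lemma besselCliffordCoeff_sub_one (m : ℕ) :
    besselCliffordCoeff (ν - 1) m = (ν + m) * besselCliffordCoeff ν m := by
  have harg : ν - 1 + m + 1 = ν + m := by ring
  rw [besselCliffordCoeff, besselCliffordCoeff, harg]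
  by_cases hzero : ν + m = 0
  · simp [hzero]
  · rw [Real.Gamma_add_one hzero]
    field_simp

lemma besselCliffordCoeff_recurrence (m : ℕ) :
    (m + 1) * (ν + m + 1) * besselCliffordCoeff ν (m + 1) = besselCliffordCoeff ν m := by
  have hsub := besselCliffordCoeff_sub_one (ν + 1) m
  rw [add_sub_cancel_right, ← succ_mul_besselCliffordCoeff_succ] at hsub
  linear_combination -hsub

lemma summable_besselClifford : Summable fun m => besselCliffordCoeff ν m * x ^ m := by
  refine summable_of_ratio_norm_eventually_le (r := 1 / 2) (by norm_num) ?_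
  have hgrowth : Tendsto (fun m : ℕ => ((m : ℝ) + 1) * (ν + m + 1)) atTop atTop :=
    (tendsto_atTop_add_const_right _ _ tendsto_natCast_atTop_atTop).atTop_mul_atTop₀
      (tendsto_atTop_add_const_right _ _
        (tendsto_atTop_add_const_left _ _ tendsto_natCast_atTop_atTop))
  filter_upwards [hgrowth.eventually_ge_atTop (2 * |x|)] with m hm
  rw [← besselCliffordCoeff_recurrence ν m]
  simp only [norm_mul, Real.norm_eq_abs, norm_pow, pow_succ, ← abs_mul ((m : ℝ) + 1)]
  calc |besselCliffordCoeff ν (m + 1)| * (|x| ^ m * |x|)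
      = 1 / 2 * (2 * |x| * |besselCliffordCoeff ν (m + 1)| * |x| ^ m) := by ring
    _ ≤ 1 / 2 * (|(m + 1) * (ν + m + 1)| * |besselCliffordCoeff ν (m + 1)| * |x| ^ m) := by
      gcongr
      exact hm.trans (le_abs_self _)

lemma besselCliffordCoeff_mul_deriv_pow_succ (m : ℕ) :
    besselCliffordCoeff ν (m + 1) * ((m + 1 : ℕ) * x ^ (m + 1 - 1)) =
      besselCliffordCoeff (ν + 1) m * x ^ m := by
  rw [← succ_mul_besselCliffordCoeff_succ, Nat.add_sub_cancel]
  push_cast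
  ring

lemma summable_deriv_besselClifford :
    Summable fun m : ℕ => besselCliffordCoeff ν m * (m * x ^ (m - 1)) := by
  rw [← summable_nat_add_iff 1]
  simpa only [besselCliffordCoeff_mul_deriv_pow_succ] using summable_besselClifford (ν + 1) x

lemma tsum_deriv_besselClifford :
    ∑' m : ℕ, besselCliffordCoeff ν m * (m * x ^ (m - 1)) = besselClifford (ν + 1) x := by
  rw [(summable_deriv_besselClifford ν x).tsum_eq_zero_add]
  simp only [besselCliffordCoeff_mul_deriv_pow_succ, Nat.cast_zero, zero_mul, mul_zero, zero_add,
    besselClifford]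

theorem hasDerivAt_besselClifford :
    HasDerivAt (besselClifford ν) (besselClifford (ν + 1) x) x := by
  have hbound (m : ℕ) (y : ℝ) (hy : y ∈ Metric.ball 0 (|x| + 1)) :
      ‖besselCliffordCoeff ν m * (m * y ^ (m - 1))‖ ≤
        |besselCliffordCoeff ν m * (m * (|x| + 1) ^ (m - 1))| := by
    rw [mem_ball_zero_iff, Real.norm_eq_abs] at hy
    have hy_le : |y| ≤ |(|x| + 1)| := hy.le.trans (le_abs_self _)
    simp only [Real.norm_eq_abs, abs_mul, abs_pow]
    gcongr
  have htermwise := hasDerivAt_tsum_of_isPreconnected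
    (summable_deriv_besselClifford ν (|x| + 1)).abs Metric.isOpen_ball
    (convex_ball 0 (|x| + 1)).isPreconnected
    (fun m y _ => (hasDerivAt_pow m y).const_mul (besselCliffordCoeff ν m)) hbound
    (Metric.mem_ball_self (by positivity)) (summable_besselClifford ν 0)
    (show x ∈ Metric.ball 0 (|x| + 1) by simp)
  rwa [tsum_deriv_besselClifford] at htermwise

lemma continuous_besselClifford : Continuous (besselClifford ν) :=
  continuous_iff_continuousAt.2 fun x => (hasDerivAt_besselClifford ν x).continuousAt

lemma besselClifford_zero : besselClifford ν 0 = 1 / Real.Gamma (ν + 1) := by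
  rw [besselClifford, tsum_eq_single 0 fun m hm => by simp [hm]]
  simp [besselCliffordCoeff]

theorem besselClifford_sub_one :
    besselClifford (ν - 1) x = ν * besselClifford ν x + x * besselClifford (ν + 1) x := by
  rw [← tsum_deriv_besselClifford, besselClifford, besselClifford, ← tsum_mul_left,
    ← tsum_mul_left, ← ((summable_besselClifford ν x).mul_left ν).tsum_add
      ((summable_deriv_besselClifford ν x).mul_left x)]
  refine tsum_congr fun m => ?_
  rw [besselCliffordCoeff_sub_one]
  cases m with
  | zero => simp
  | succ m => rw [Nat.add_sub_cancel]; ring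

end BesselClifford

section BesselJ

variable {ν z : ℝ}

lemma besselJ_eq_rpow_mul_besselClifford (hz : 0 ≤ z) (h : 0 < z ∨ 0 ≤ ν) :
    besselJ ν z = (z / 2) ^ ν * besselClifford ν (-(z / 2) ^ 2) := by
  rw [besselJ, besselClifford, ← tsum_mul_left]
  refine tsum_congr fun m => ?_
  have hsplit : (z / 2) ^ (ν + 2 * (m : ℝ)) = (z / 2) ^ ν * ((z / 2) ^ 2) ^ m := by
    rw [← pow_mul, ← Real.rpow_natCast, Nat.cast_mul, Nat.cast_ofNat]
    rcases h with hz | hν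
    · exact Real.rpow_add (by positivity) _ _
    · exact Real.rpow_add_of_nonneg (by positivity) hν (by positivity)
  rw [hsplit, besselCliffordCoeff, neg_pow ((z / 2) ^ 2)]
  ring

theorem hasDerivAt_besselJ (ν : ℝ) (hz : 0 < z) :
    HasDerivAt (besselJ ν) (ν / z * besselJ ν z - besselJ (ν + 1) z) z := by
  have hz2 : 0 < z / 2 := by positivity
  have hhalf : HasDerivAt (fun y : ℝ => y / 2) (1 / 2) z := (hasDerivAt_id z).div_const 2
  have hprod := (hhalf.rpow_const (p := ν) (Or.inl hz2.ne')).mul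
    ((hasDerivAt_besselClifford ν (-(z / 2) ^ 2)).comp z (hhalf.fun_pow 2).fun_neg)
  refine (hprod.congr_of_eventuallyEq ?_).congr_deriv ?_
  · filter_upwards [lt_mem_nhds hz] with y hy
    exact besselJ_eq_rpow_mul_besselClifford hy.le (Or.inl hy)
  · rw [besselJ_eq_rpow_mul_besselClifford hz.le (Or.inl hz),
      besselJ_eq_rpow_mul_besselClifford hz.le (Or.inl hz), Real.rpow_add_one hz2.ne',
      Real.rpow_sub_one hz2.ne']
    simp only [Function.comp_apply]
    field_simp
    ring

theorem besselJ_sub_one (ν : ℝ) (hz : 0 < z) :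
    besselJ (ν - 1) z = 2 * ν / z * besselJ ν z - besselJ (ν + 1) z := by
  have hz2 : z / 2 ≠ 0 := by positivity
  simp only [besselJ_eq_rpow_mul_besselClifford hz.le (Or.inl hz), Real.rpow_add_one hz2,
    Real.rpow_sub_one hz2, besselClifford_sub_one]
  field_simp
  ring

lemma hasDerivAt_besselJ' (ν : ℝ) (hz : 0 < z) :
    HasDerivAt (besselJ ν) (besselJ (ν - 1) z - ν / z * besselJ ν z) z := by
  refine (hasDerivAt_besselJ ν hz).congr_deriv ?_
  rw [besselJ_sub_one ν hz]
  ring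

lemma continuousOn_besselJ (hν : 0 ≤ ν) : ContinuousOn (besselJ ν) (Ici 0) := by
  have hcont : Continuous fun z : ℝ => (z / 2) ^ ν * besselClifford ν (-(z / 2) ^ 2) :=
    ((continuous_id.div_const 2).rpow_const fun _ => Or.inr hν).mul
      ((continuous_besselClifford ν).comp (by fun_prop))
  exact hcont.continuousOn.congr fun z hz => besselJ_eq_rpow_mul_besselClifford hz (Or.inr hν)

lemma besselJ_zero (hν : 0 < ν) : besselJ ν 0 = 0 := by
  simp [besselJ_eq_rpow_mul_besselClifford le_rfl (Or.inr hν.le), Real.zero_rpow hν.ne']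

lemma eventually_besselJ_pos (hν : -1 < ν) : ∀ᶠ z in 𝓝[>] 0, 0 < besselJ ν z := by
  have hcont : Continuous fun z : ℝ => besselClifford ν (-(z / 2) ^ 2) :=
    (continuous_besselClifford ν).comp (by fun_prop)
  have hpos : 0 < besselClifford ν (-(0 / 2) ^ 2) := by
    have := Real.Gamma_pos_of_pos (neg_lt_iff_pos_add.1 hν)
    simpa [besselClifford_zero] using this
  filter_upwards [(hcont.continuousAt.eventually (lt_mem_nhds hpos)).filter_mono
    nhdsWithin_le_nhds, self_mem_nhdsWithin] with z hC hz
  rw [besselJ_eq_rpow_mul_besselClifford (le_of_lt hz) (Or.inl hz)]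
  exact mul_pos (Real.rpow_pos_of_pos (half_pos hz) ν) hC

end BesselJ

section Turan

variable {ν z : ℝ}

/-- The Turán determinant `J_ν² - J_{ν-1} J_{ν+1}` multiplied by `z`, with `J_{ν-1}` eliminated by
the three-term recurrence. -/
noncomputable def besselTuran (ν z : ℝ) : ℝ :=
  z * (besselJ ν z ^ 2 + besselJ (ν + 1) z ^ 2) - 2 * ν * (besselJ ν z * besselJ (ν + 1) z)

/-- The Wronskian `J_ν J_{ν+1}' - J_ν' J_{ν+1}` multiplied by `z`, with the derivatives eliminated;
its sign governs the monotonicity of `J_{ν+1} / J_ν`. -/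
noncomputable def besselWronskian (ν z : ℝ) : ℝ :=
  besselTuran ν z - besselJ ν z * besselJ (ν + 1) z

lemma hasDerivAt_besselJ_add_one (ν : ℝ) (hz : 0 < z) :
    HasDerivAt (besselJ (ν + 1)) (besselJ ν z - (ν + 1) / z * besselJ (ν + 1) z) z := by
  simpa using hasDerivAt_besselJ' (ν + 1) hz

lemma hasDerivAt_mul_besselTuran (ν : ℝ) (hz : 0 < z) :
    HasDerivAt (fun z => z * besselTuran ν z) (2 * z * besselJ ν z ^ 2) z := by
  have hJ := hasDerivAt_besselJ ν hz
  have hJ1 := hasDerivAt_besselJ_add_one ν hz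
  refine ((hasDerivAt_id z).mul (((hasDerivAt_id z).mul ((hJ.fun_pow 2).fun_add
    (hJ1.fun_pow 2))).fun_sub ((hJ.fun_mul hJ1).const_mul (2 * ν)))).congr_deriv ?_
  simp only [Pi.mul_apply, id]
  field_simp
  ring

-- `z w' = (2ν + 1) J_ν J_{ν+1}` for the Wronskian `w`, so the integrating factor `z ^ (2ν + 1)`
-- completes the right-hand side to the Turán determinant.
lemma hasDerivAt_rpow_mul_besselWronskian (ν : ℝ) (hz : 0 < z) :
    HasDerivAt (fun z => z ^ (2 * ν + 1) * besselWronskian ν z)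
      ((2 * ν + 1) * z ^ (2 * ν) * besselTuran ν z) z := by
  have hJ := hasDerivAt_besselJ ν hz
  have hJ1 := hasDerivAt_besselJ_add_one ν hz
  refine ((Real.hasDerivAt_rpow_const (p := 2 * ν + 1) (Or.inl hz.ne')).mul
    ((((hasDerivAt_id z).mul ((hJ.fun_pow 2).fun_add (hJ1.fun_pow 2))).fun_sub
      ((hJ.fun_mul hJ1).const_mul (2 * ν))).fun_sub (hJ.fun_mul hJ1))).congr_deriv ?_
  simp only [Pi.mul_apply, id, add_sub_cancel_right, Real.rpow_add_one hz.ne', besselTuran]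
  field_simp
  ring

lemma continuousOn_besselTuran (hν : 0 ≤ ν) : ContinuousOn (besselTuran ν) (Ici 0) := by
  have hJ := continuousOn_besselJ hν
  have hJ1 := continuousOn_besselJ (ν := ν + 1) (by positivity)
  unfold besselTuran
  fun_prop

lemma continuousOn_besselWronskian (hν : 0 ≤ ν) : ContinuousOn (besselWronskian ν) (Ici 0) :=
  (continuousOn_besselTuran hν).sub
    ((continuousOn_besselJ hν).mul (continuousOn_besselJ (by positivity)))

theorem besselTuran_pos (hν : 0 ≤ ν) (hz : 0 < z) : 0 < besselTuran ν z := by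
  refine pos_of_mul_pos_right (a := z) ?_ hz.le
  refine pos_of_deriv_nonneg_of_eventually_pos (a := 0) (f := fun z => z * besselTuran ν z)
    (continuousOn_id.mul (continuousOn_besselTuran hν)) (by simp)
    (fun y hy => hasDerivAt_mul_besselTuran ν hy) (fun y (hy : 0 < y) => by positivity) ?_ hz
  filter_upwards [eventually_besselJ_pos (neg_one_lt_zero.trans_le hν), self_mem_nhdsWithin]
    with y hJ (hy : 0 < y)
  positivity

theorem besselWronskian_pos (hν : 0 ≤ ν) (hz : 0 < z) : 0 < besselWronskian ν z := by
  have hderiv_pos (y : ℝ) (hy : 0 < y) : 0 < (2 * ν + 1) * y ^ (2 * ν) * besselTuran ν y := by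
    have := besselTuran_pos hν hy
    positivity
  have hexp : 2 * ν + 1 ≠ 0 := by positivity
  refine pos_of_mul_pos_right (a := z ^ (2 * ν + 1)) ?_ (by positivity)
  refine pos_of_deriv_nonneg_of_eventually_pos (a := 0)
    (f := fun z => z ^ (2 * ν + 1) * besselWronskian ν z)
    ((Real.continuous_rpow_const (by positivity)).continuousOn.mul
      (continuousOn_besselWronskian hν)) (by simp [Real.zero_rpow hexp])
    (fun y hy => hasDerivAt_rpow_mul_besselWronskian ν hy) (fun y hy => (hderiv_pos y hy).le) ?_ hz
  filter_upwards [self_mem_nhdsWithin] with y hy using hderiv_pos y hy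

lemma besselJ_add_one_ne_zero_of_eq_zero (hν : 0 ≤ ν) (hz : 0 < z) (hJ : besselJ ν z = 0) :
    besselJ (ν + 1) z ≠ 0 := by
  intro hJ1
  simpa [besselTuran, hJ, hJ1] using besselTuran_pos hν hz

end Turan

section Monotonicity

variable {ν : ℝ} {s : Set ℝ}

lemma hasDerivAt_besselJ_add_one_div (ν : ℝ) {z : ℝ} (hz : 0 < z) (hJ : besselJ ν z ≠ 0) :
    HasDerivAt (fun z => besselJ (ν + 1) z / besselJ ν z)
      (besselWronskian ν z / (z * besselJ ν z ^ 2)) z := by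
  refine ((hasDerivAt_besselJ_add_one ν hz).fun_div (hasDerivAt_besselJ ν hz) hJ).congr_deriv ?_
  rw [besselWronskian, besselTuran]
  field_simp
  ring

theorem strictMonoOn_besselJ_add_one_div (hν : 0 ≤ ν) (hs : Convex ℝ s) (hpos : s ⊆ Ioi 0)
    (hJ : ∀ z ∈ s, besselJ ν z ≠ 0) :
    StrictMonoOn (fun z => besselJ (ν + 1) z / besselJ ν z) s := by
  have hderiv (z : ℝ) (hz : z ∈ s) := hasDerivAt_besselJ_add_one_div ν (hpos hz) (hJ z hz)
  refine strictMonoOn_of_hasDerivWithinAt_pos hs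
    (fun z hz => (hderiv z hz).continuousAt.continuousWithinAt)
    (fun z hz => (hderiv z (interior_subset hz)).hasDerivWithinAt) fun z hz => ?_
  have hz_pos : 0 < z := hpos (interior_subset hz)
  have hW := besselWronskian_pos hν hz_pos
  have hJz := hJ z (interior_subset hz)
  positivity

lemma logDeriv_besselJ {z : ℝ} (hz : 0 < z) (hJ : besselJ ν z ≠ 0) :
    logDeriv (besselJ ν) z = ν / z - besselJ (ν + 1) z / besselJ ν z := by
  rw [logDeriv_apply, (hasDerivAt_besselJ ν hz).deriv]
  field_simp

theorem strictAntiOn_logDeriv_besselJ (hν : 0 ≤ ν) (hs : Convex ℝ s) (hpos : s ⊆ Ioi 0)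
    (hJ : ∀ z ∈ s, besselJ ν z ≠ 0) : StrictAntiOn (logDeriv (besselJ ν)) s := by
  intro y hy z hz hyz
  rw [logDeriv_besselJ (hpos hy) (hJ y hy), logDeriv_besselJ (hpos hz) (hJ z hz)]
  have hquot := strictMonoOn_besselJ_add_one_div hν hs hpos hJ hy hz hyz
  have hy_pos : 0 < y := hpos hy
  have hdiv : ν / z ≤ ν / y := by gcongr
  linarith

lemma besselJ_sub_one_div {z : ℝ} (hz : 0 < z) (hJ : besselJ ν z ≠ 0) :
    besselJ (ν - 1) z / besselJ ν z = ν / z + logDeriv (besselJ ν) z := by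
  rw [logDeriv_besselJ hz hJ, besselJ_sub_one ν hz]
  field_simp
  ring

theorem strictAntiOn_besselJ_sub_one_div (hν : 0 ≤ ν) (hs : Convex ℝ s) (hpos : s ⊆ Ioi 0)
    (hJ : ∀ z ∈ s, besselJ ν z ≠ 0) :
    StrictAntiOn (fun z => besselJ (ν - 1) z / besselJ ν z) s := by
  intro y hy z hz hyz
  simp only [besselJ_sub_one_div (hpos hy) (hJ y hy), besselJ_sub_one_div (hpos hz) (hJ z hz)]
  have hlog := strictAntiOn_logDeriv_besselJ hν hs hpos hJ hy hz hyz
  have hy_pos : 0 < y := hpos hy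
  have hdiv : ν / z ≤ ν / y := by gcongr
  linarith

end Monotonicity

section Zeros

variable {ν a b z : ℝ}

lemma deriv_besselJ_ne_zero_of_eq_zero (hν : 0 ≤ ν) (hz : 0 < z) (hJ : besselJ ν z = 0) :
    deriv (besselJ ν) z ≠ 0 := by
  simpa [(hasDerivAt_besselJ ν hz).deriv, hJ] using besselJ_add_one_ne_zero_of_eq_zero hν hz hJ

lemma besselJ_sub_one_add_ne_zero_of_eq_zero (hν : 0 ≤ ν) (hz : 0 < z) (hJ : besselJ ν z = 0) :
    besselJ (ν - 1) z + besselJ ν z ≠ 0 := by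
  simpa [besselJ_sub_one ν hz, hJ] using besselJ_add_one_ne_zero_of_eq_zero hν hz hJ

lemma exists_deriv_besselJ_eq_zero (hν : 0 ≤ ν) (ha : 0 ≤ a) (hab : a < b)
    (hJa : besselJ ν a = 0) (hJb : besselJ ν b = 0) :
    ∃ c ∈ Ioo a b, deriv (besselJ ν) c = 0 :=
  exists_deriv_eq_zero hab
    ((continuousOn_besselJ hν).mono (Icc_subset_Ici_self.trans (Ici_subset_Ici.2 ha)))
    (hJa.trans hJb.symm)

lemma exists_besselJ_sub_one_add_eq_zero (hν : 0 ≤ ν) (ha : 0 ≤ a) (hab : a < b)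
    (hJa : besselJ ν a = 0) (hJb : besselJ ν b = 0) :
    ∃ c ∈ Ioo a b, besselJ (ν - 1) c + besselJ ν c = 0 := by
  have hderiv (z : ℝ) (hz : z ∈ Ioo a b) :
      HasDerivAt (fun z => z ^ ν * Real.exp z * besselJ ν z)
        (z ^ ν * Real.exp z * (besselJ (ν - 1) z + besselJ ν z)) z := by
    have hz_pos : 0 < z := ha.trans_lt hz.1
    refine (((Real.hasDerivAt_rpow_const (Or.inl hz_pos.ne')).fun_mul
      (Real.hasDerivAt_exp z)).fun_mul (hasDerivAt_besselJ' ν hz_pos)).congr_deriv ?_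
    rw [Real.rpow_sub_one hz_pos.ne']
    field_simp
    ring
  have hcont : ContinuousOn (fun z => z ^ ν * Real.exp z * besselJ ν z) (Icc a b) :=
    ((Real.continuous_rpow_const hν).mul Real.continuous_exp).continuousOn.mul
      ((continuousOn_besselJ hν).mono (Icc_subset_Ici_self.trans (Ici_subset_Ici.2 ha)))
  obtain ⟨c, hc, hzero⟩ := exists_hasDerivAt_eq_zero hab hcont (by simp [hJa, hJb]) hderiv
  have hc_pos : 0 < c := ha.trans_lt hc.1
  exact ⟨c, hc, (mul_eq_zero.1 hzero).resolve_left (by positivity)⟩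

lemma subsingleton_deriv_besselJ_eq_zero (hν : 0 ≤ ν) (ha : 0 ≤ a)
    (hJ : ∀ z ∈ Ioo a b, besselJ ν z ≠ 0) :
    {z ∈ Ioo a b | deriv (besselJ ν) z = 0}.Subsingleton := by
  rintro y ⟨hy, hy0⟩ z ⟨hz, hz0⟩
  have hanti := strictAntiOn_logDeriv_besselJ hν (convex_Ioo a b)
    (fun z hz => ha.trans_lt hz.1) hJ
  exact hanti.injOn hy hz (by simp [logDeriv_apply, hy0, hz0])

lemma subsingleton_besselJ_sub_one_add_eq_zero (hν : 0 ≤ ν) (ha : 0 ≤ a)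
    (hJ : ∀ z ∈ Ioo a b, besselJ ν z ≠ 0) :
    {z ∈ Ioo a b | besselJ (ν - 1) z + besselJ ν z = 0}.Subsingleton := by
  rintro y ⟨hy, hy0⟩ z ⟨hz, hz0⟩
  have hanti := strictAntiOn_besselJ_sub_one_div hν (convex_Ioo a b)
    (fun z hz => ha.trans_lt hz.1) hJ
  refine hanti.injOn hy hz ?_
  simp only [eq_neg_of_add_eq_zero_left hy0, eq_neg_of_add_eq_zero_left hz0, neg_div,
    div_self (hJ y hy), div_self (hJ z hz)]

lemma logDeriv_besselJ_neg_of_sub_one_add_eq_zero (hν : 0 ≤ ν) (hz : 0 < z) (hJ : besselJ ν z ≠ 0)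
    (hsum : besselJ (ν - 1) z + besselJ ν z = 0) : logDeriv (besselJ ν) z < 0 := by
  have hquot := besselJ_sub_one_div hz hJ
  rw [eq_neg_of_add_eq_zero_left hsum, neg_div, div_self hJ] at hquot
  have : 0 ≤ ν / z := by positivity
  linarith

lemma lt_of_deriv_besselJ_eq_zero_of_sub_one_add_eq_zero (hν : 0 ≤ ν) (ha : 0 ≤ a)
    (hJ : ∀ z ∈ Ioo a b, besselJ ν z ≠ 0) {y : ℝ} (hy : y ∈ Ioo a b)
    (hy0 : deriv (besselJ ν) y = 0) (hz : z ∈ Ioo a b)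
    (hz0 : besselJ (ν - 1) z + besselJ ν z = 0) : y < z := by
  have hanti := strictAntiOn_logDeriv_besselJ hν (convex_Ioo a b)
    (fun z hz => ha.trans_lt hz.1) hJ
  rw [← hanti.lt_iff_gt hz hy, logDeriv_apply _ y, hy0, zero_div]
  exact logDeriv_besselJ_neg_of_sub_one_add_eq_zero hν (ha.trans_lt hz.1) (hJ z hz) hz0

end Zeros

theorem stmt13_general (ν : ℝ) (hν : 0 < ν) (k : ℕ) (hk : 1 ≤ k)
    (jn jpn lamp : ℕ → ℝ)
    (hjn : EnumPosZeros (besselJ ν) jn)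
    (hjpn : EnumPosZeros (deriv (besselJ ν)) jpn)
    (hlamp : EnumPosZeros (fun z => besselJ (ν - 1) z + besselJ ν z) lamp) :
    jn k < jpn (k + 1) ∧ jpn (k + 1) < lamp (k + 1) ∧ lamp (k + 1) < jn (k + 1) := by
  have hjp_mem := hjn.interlace hjpn (besselJ_zero hν)
    (fun _ => deriv_besselJ_ne_zero_of_eq_zero hν.le)
    (fun _ _ => exists_deriv_besselJ_eq_zero hν.le)
    (fun _ _ => subsingleton_deriv_besselJ_eq_zero hν.le) k
  have hlam_mem := hjn.interlace hlamp (besselJ_zero hν)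
    (fun _ => besselJ_sub_one_add_ne_zero_of_eq_zero hν.le)
    (fun _ _ => exists_besselJ_sub_one_add_eq_zero hν.le)
    (fun _ _ => subsingleton_besselJ_sub_one_add_eq_zero hν.le) k
  have hlt : jpn (k + 1) < lamp (k + 1) :=
    lt_of_deriv_besselJ_eq_zero_of_sub_one_add_eq_zero hν.le (hjn.update_nonneg k)
      (fun _ => hjn.ne_zero_of_mem_Ioo) hjp_mem (hjpn.apply_eq_zero k) hlam_mem
      (hlamp.apply_eq_zero k)
  rw [Function.update_of_ne (by lia), Function.update_of_ne k.succ_ne_zero] at hjp_mem hlam_mem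
  exact ⟨hjp_mem.1, hlt, hlam_mem.2⟩

/-- For `ν ≥ 1` and every `k ≥ 1`,
`j_{ν,k} < j′_{ν,k+1} < λ⁺_{ν−1,k+1} < j_{ν,k+1}`. -/
theorem stmt13 (ν : ℝ) (hν : 1 ≤ ν) (k : ℕ) (hk : 1 ≤ k)
    (jn jpn lamp : ℕ → ℝ)
    (hjn : EnumPosZeros (besselJ ν) jn)
    (hjpn : EnumPosZeros (deriv (besselJ ν)) jpn)
    (hlamp : EnumPosZeros (fun z => besselJ (ν - 1) z + besselJ ν z) lamp) :
    jn k < jpn (k + 1) ∧ jpn (k + 1) < lamp (k + 1) ∧ lamp (k + 1) < jn (k + 1) := by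
  exact stmt13_general ν (zero_lt_one.trans_le hν) k hk jn jpn lamp hjn hjpn hlamp
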